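/- A solvable group of finite abelian rank with no proper subgroups of finite index is nilpotent; consequently, if G is a solvable group with no maximal subgroups and G is not nilpotent, then G has infinite (at least countable) abelian rank. -/

import Mathlib

/-- `G` has finite abelian (Prüfer) rank: a uniform bound on the minimal number of
generators of its finitely generated subgroups. -/
def HasFiniteRank (G : Type*) [Group G] : Prop :=
  ∃ r : ℕ, ∀ H : Subgroup G, H.FG →
    ∃ S : Finset G, S.card ≤ r ∧ Subgroup.closure (S : Set G) = H

/-!
An F-perfect group (one without proper subgroups of finite index) acts trivially on every finite
set and has no nontrivial homomorphism to a residually finite group. The heart of the matter is that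
a solvable F-perfect group `G` of finite rank acts trivially on every irreducible
finite-dimensional rational representation `V`.

For a normal subgroup `A` of `G` with abelian image in `End V`, let `K` be the algebra generated by
this image. It is commutative and finite-dimensional, so `G` fixes each of its finitely many primes;
by irreducibility an associated prime of `V` vanishes and `K` is a number field. Its automorphism
group is finite, so `G` acts `K`-linearly. Since `(𝓞 K)ˣ` is residually finite and `Kˣ / (𝓞 K)ˣ`
embeds in a product of copies of `ℤ`, the `K`-determinant is trivial on `G`; on the scalar `a ∈ A`
it is `a ^ dim V`. Hence every abelian normal subgroup of the image of `G` has finite exponent, and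
is finite by the rank condition. Finite normal subgroups of an F-perfect group are central, and so,
ascending the derived series, the image of `G` is abelian, finite, and finally trivial.

Now let `A` be an abelian normal subgroup with `G ⧸ A` nilpotent. Some term of the lower central
series lies in `A`. Since `G` acts trivially on the composition factors of `ℚ ⊗ A`, later terms
descend along a composition series until they land in the torsion of `A`. A torsion element has
finitely many conjugates, because the elements of `A` of bounded order form a finite set, so it is
central. Nilpotency follows by induction on the derived length.
-/

/-- A group is F-perfect if it has no proper subgroup of finite index. Mathlib's `Subgroup.index`
is `0` exactly for the subgroups of infinite index. -/
def IsFPerfect (G : Type*) [Group G] : Prop :=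
  ∀ H : Subgroup G, H.index ≠ 0 → H = ⊤

section FPerfect

variable {G H : Type*} [Group G] [Group H]

theorem isFPerfect_of_forall_not_isCoatom (h : ∀ M : Subgroup G, ¬IsCoatom M) : IsFPerfect G := by
  intro H hH
  induction hn : H.index using Nat.strong_induction_on generalizing H with
  | _ n ih =>
    by_contra hne
    have : H.FiniteIndex := ⟨hH⟩
    refine h H ⟨hne, fun L hL => ?_⟩
    exact ih L.index (hn ▸ Subgroup.index_strictAnti hL) L
      (Subgroup.finiteIndex_of_le hL.le).index_ne_zero rfl

namespace IsFPerfect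

theorem of_surjective (hG : IsFPerfect G) (f : G →* H) (hf : Function.Surjective f) :
    IsFPerfect H := fun K hK =>
  Subgroup.comap_injective hf <| by
    rw [Subgroup.comap_top, hG (K.comap f) (by rwa [K.index_comap_of_surjective hf])]

theorem eq_one_of_residuallyFinite (hG : IsFPerfect G) [Group.ResiduallyFinite H] (f : G →* H) :
    f = 1 := by
  ext g
  refine Group.residuallyFinite_iff_forall_finiteIndex.1 ‹_› (f g) fun K hK => ?_
  have hcomap : K.comap f = ⊤ := hG _ <| by
    rw [Subgroup.index_comap]
    exact Subgroup.FiniteIndex.index_ne_zero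
  exact hcomap.ge (Subgroup.mem_top g)

theorem smul_eq_of_finite_orbit {X : Type*} [MulAction G X] (hG : IsFPerfect G) {x : X}
    (hx : (MulAction.orbit G x).Finite) (g : G) : g • x = x := by
  have hstab : MulAction.stabilizer G x = ⊤ := hG _ <| by
    rw [MulAction.index_stabilizer]
    exact Set.ncard_ne_zero_of_mem (MulAction.mem_orbit_self x) hx
  exact hstab.ge (Subgroup.mem_top g)

theorem le_center_of_finite (hG : IsFPerfect G) (B : Subgroup G) [B.Normal] [Finite B] :
    B ≤ Subgroup.center G := by
  intro b hb
  have hconj : (MulAut.conjNormal : G →* MulAut B) = 1 := hG.eq_one_of_residuallyFinite _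
  refine Subgroup.mem_center_iff.2 fun g => mul_inv_eq_iff_eq_mul.1 ?_
  rw [← MulAut.conjNormal_apply g ⟨b, hb⟩, hconj, MonoidHom.one_apply, MulAut.one_apply]

theorem subsingleton_of_finite (hG : IsFPerfect G) [Finite G] : Subsingleton G :=
  Subgroup.subsingleton_iff.1 <| subsingleton_of_bot_eq_top <| hG ⊥ <| by
    rw [Subgroup.index_bot]
    exact Nat.card_pos.ne'

end IsFPerfect

end FPerfect

namespace HasFiniteRank

variable {G H : Type*} [Group G] [Group H]

theorem of_surjective (hG : HasFiniteRank G) (f : G →* H) (hf : Function.Surjective f) :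
    HasFiniteRank H := by
  classical
  obtain ⟨r, hr⟩ := hG
  refine ⟨r, ?_⟩
  rintro _ ⟨S, rfl⟩
  obtain ⟨S', -, rfl⟩ := Finset.subset_set_image_iff.1
    (show (S : Set H) ⊆ f '' Set.univ by simp [hf.range_eq])
  obtain ⟨T, hT, hTS⟩ := hr (Subgroup.closure (S' : Set G)) ⟨S', rfl⟩
  refine ⟨T.image f, Finset.card_image_le.trans hT, ?_⟩
  rw [Finset.coe_image, Finset.coe_image, ← MonoidHom.map_closure, hTS, MonoidHom.map_closure]

theorem of_injective (hH : HasFiniteRank H) (f : G →* H) (hf : Function.Injective f) :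
    HasFiniteRank G := by
  classical
  obtain ⟨r, hr⟩ := hH
  refine ⟨r, ?_⟩
  rintro _ ⟨S, rfl⟩
  obtain ⟨T, hT, hTS⟩ := hr (Subgroup.closure (S.image f : Finset H)) ⟨S.image f, rfl⟩
  rw [Finset.coe_image, ← MonoidHom.map_closure] at hTS
  have hTf : (T : Set H) ⊆ Set.range f := fun x hx =>
    (Subgroup.map_le_range f _) (hTS.le (Subgroup.subset_closure hx))
  refine ⟨T.preimage f hf.injOn, ?_, ?_⟩
  · rw [Finset.card_preimage]
    exact (Finset.card_filter_le _ _).trans hT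
  · apply Subgroup.map_injective hf
    rw [← hTS, MonoidHom.map_closure, Finset.coe_preimage, Set.image_preimage_eq_of_subset hTf]

theorem finite_of_pow_eq_one {A : Type*} [CommGroup A] (hA : HasFiniteRank A) {m : ℕ} (hm : m ≠ 0)
    (hpow : ∀ a : A, a ^ m = 1) : Finite A := by
  obtain ⟨r, hr⟩ := hA
  have hcard (B : Subgroup A) (hB : B.FG) : Nat.card B ∣ m ^ r := by
    obtain ⟨T, hT, rfl⟩ := hr B hB
    exact (card_dvd_exponent_pow_rank' _ fun a => Subtype.ext (hpow a)).trans
      (pow_dvd_pow m ((Subgroup.rank_closure_finset_le_card T).trans hT))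
  by_contra hinf
  rw [not_finite_iff_infinite] at hinf
  obtain ⟨S, hS⟩ := Infinite.exists_subset_card_eq A (m ^ r + 1)
  have hdvd := hcard (Subgroup.closure (S : Set A)) ⟨S, rfl⟩
  have : Finite (Subgroup.closure (S : Set A)) :=
    Nat.finite_of_card_ne_zero (ne_zero_of_dvd_ne_zero (pow_ne_zero r hm) hdvd)
  have hle : S.card ≤ Nat.card (Subgroup.closure (S : Set A)) := by
    rw [← Set.ncard_coe_finset]
    exact Set.ncard_le_ncard Subgroup.subset_closure (Set.toFinite _)
  have := Nat.le_of_dvd (Nat.pos_of_ne_zero (pow_ne_zero r hm)) hdvd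
  omega

theorem rank_additive_lt_aleph0 {A : Type*} [CommGroup A] (hA : HasFiniteRank A) :
    Module.rank ℤ (Additive A) < Cardinal.aleph0 := by
  classical
  obtain ⟨r, hr⟩ := hA
  refine (rank_le (n := r) fun S hS => ?_).trans_lt Cardinal.natCast_lt_aleph0
  obtain ⟨T, hT, hTS⟩ := hr (Subgroup.closure (S.image Additive.toMul : Finset A)) ⟨_, rfl⟩
  have hspan : ∀ a ∈ S, a ∈
      Submodule.span ℤ ((T.image Additive.ofMul : Finset (Additive A)) : Set (Additive A)) := by
    intro a ha
    rw [← Submodule.mem_toAddSubgroup, Submodule.span_int_eq_addSubgroupClosure,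
      Finset.coe_image, Equiv.image_eq_preimage_symm, Additive.ofMul_symm_eq,
      ← Subgroup.toAddSubgroup_closure, hTS]
    change a.toMul ∈ Subgroup.closure _
    exact Subgroup.subset_closure (Finset.mem_image_of_mem Additive.toMul ha)
  have hcard := linearIndependent_le_span' _ hS _ (Set.range_subset_iff.2 fun a => hspan a a.2)
  simp only [Cardinal.mk_fintype, Finset.coe_sort_coe, Fintype.card_coe, Nat.cast_le] at hcard
  exact hcard.trans (Finset.card_image_le.trans hT)

end HasFiniteRank

section AbelianNormal

open scoped commutatorElement IsMulCommutative

variable {G : Type*} [Group G]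

theorem HasFiniteRank.finite_subgroup_of_pow_eq_one (hG : HasFiniteRank G) (A : Subgroup G)
    [IsMulCommutative A] {m : ℕ} (hm : m ≠ 0) (hpow : ∀ a ∈ A, a ^ m = 1) : Finite A :=
  (hG.of_injective A.subtype A.subtype_injective).finite_of_pow_eq_one hm fun a =>
    Subtype.ext (hpow a a.2)

theorem commute_pow_of_commutatorElement_mem_center {b c : G} {m : ℕ}
    (hz : ⁅b, c⁆ ∈ Subgroup.center G) (hm : ⁅b, c⁆ ^ m = 1) : Commute c (b ^ m) := by
  have hcb : SemiconjBy c b (⁅b, c⁆⁻¹ * b) := by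
    rw [SemiconjBy, commutatorElement_inv, commutatorElement_def]
    group
  have hzb : Commute ⁅b, c⁆⁻¹ b :=
    (Subgroup.mem_center_iff.1 (inv_mem hz) b).symm
  have hpow := hcb.pow_right m
  rwa [hzb.mul_pow, inv_pow, hm, inv_one, one_mul] at hpow

theorem IsFPerfect.pow_card_center_mem_center (hG : IsFPerfect G)
    (hA : ∀ A : Subgroup G, A.Normal → IsMulCommutative A → Finite A)
    (B : Subgroup G) [B.Normal] (hB : ⁅B, B⁆ ≤ Subgroup.center G) {b : G} (hb : b ∈ B) :
    b ^ Nat.card (Subgroup.center G) ∈ Subgroup.center G := by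
  -- The centre of `B` is abelian and normal in `G`, so it is finite and therefore central in `G`.
  have hcomm : IsMulCommutative (Subgroup.centralizer (B : Set G) ⊓ B : Subgroup G) :=
    Subgroup.le_centralizer_iff_isMulCommutative.1 <|
      inf_le_left.trans (Subgroup.centralizer_le inf_le_right)
  have := hA _ inferInstance hcomm
  refine hG.le_center_of_finite (Subgroup.centralizer (B : Set G) ⊓ B)
    ⟨Subgroup.mem_centralizer_iff.2 fun c hc => ?_, pow_mem hb _⟩
  have hz : ⁅b, c⁆ ∈ Subgroup.center G := hB (Subgroup.commutator_mem_commutator hb hc)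
  have : Finite (Subgroup.center G) := hA _ inferInstance inferInstance
  exact commute_pow_of_commutatorElement_mem_center hz
    (congrArg Subtype.val (pow_card_eq_one' (x := (⟨_, hz⟩ : Subgroup.center G))))

theorem IsFPerfect.finite_of_commutator_le_center (hG : IsFPerfect G) (hr : HasFiniteRank G)
    (hA : ∀ A : Subgroup G, A.Normal → IsMulCommutative A → Finite A)
    (B : Subgroup G) [B.Normal] (hB : ⁅B, B⁆ ≤ Subgroup.center G) : Finite B := by
  have : Finite (Subgroup.center G) := hA _ inferInstance inferInstance
  let f := (QuotientGroup.mk' (Subgroup.center G)).comp B.subtype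
  have hf (b : B) : f b = 1 ↔ (b : G) ∈ Subgroup.center G := QuotientGroup.eq_one_iff _
  refine f.finite_iff_finite_ker_range.2 ⟨?_, ?_⟩
  · exact Finite.of_injective (fun b : f.ker => (⟨b, (hf b).1 b.2⟩ : Subgroup.center G))
      fun b c h => Subtype.ext (Subtype.ext (Subtype.mk_eq_mk.1 h))
  · have : IsMulCommutative f.range := ⟨⟨by
      rintro ⟨_, b, rfl⟩ ⟨_, c, rfl⟩
      rw [Subtype.ext_iff]
      change f b * f c = f c * f b
      rw [← commutatorElement_eq_one_iff_mul_comm, ← map_commutatorElement]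
      exact (hf _).2 (hB (Subgroup.commutator_mem_commutator b.2 c.2))⟩⟩
    refine (hr.of_surjective _ (QuotientGroup.mk'_surjective _)).finite_subgroup_of_pow_eq_one _
      (m := Nat.card (Subgroup.center G)) Nat.card_pos.ne' ?_
    rintro _ ⟨b, rfl⟩
    rw [← map_pow]
    exact (hf _).2 (hG.pow_card_center_mem_center hA B hB b.2)

theorem IsFPerfect.subsingleton_of_forall_finite (hG : IsFPerfect G) [Group.IsSolvable G]
    (hr : HasFiniteRank G)
    (hA : ∀ A : Subgroup G, A.Normal → IsMulCommutative A → Finite A) : Subsingleton G := by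
  have htop : ∀ n, derivedSeries G n ≤ Subgroup.center G → ⊤ ≤ Subgroup.center G := by
    intro n
    induction n with
    | zero => exact id
    | succ n ih =>
      intro hn
      have : Finite (derivedSeries G n) := hG.finite_of_commutator_le_center hr hA _ hn
      exact ih (hG.le_center_of_finite _)
  obtain ⟨n, hn⟩ := (Group.isSolvable_def G).1 ‹_›
  have : Finite (⊤ : Subgroup G) := by
    rw [← top_le_iff.1 (htop n (hn ▸ bot_le))]
    exact hA _ inferInstance inferInstance
  have : Finite G := .of_equiv _ Subgroup.topEquiv.toEquiv
  exact hG.subsingleton_of_finite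

end AbelianNormal

section NumberField

theorem residuallyFinite_multiplicative_int : Group.ResiduallyFinite (Multiplicative ℤ) := by
  refine Group.residuallyFinite_of_forall_exists_finite_monoidHom fun g hg => ?_
  have : NeZero (g.toAdd.natAbs + 1) := ⟨Nat.succ_ne_zero _⟩
  refine ⟨Multiplicative (ZMod (g.toAdd.natAbs + 1)), inferInstance, inferInstance,
    (Int.castAddHom _).toMultiplicative, fun h => hg ?_⟩
  have hdvd : ((g.toAdd.natAbs + 1 : ℕ) : ℤ) ∣ g.toAdd :=
    (ZMod.intCast_zmod_eq_zero_iff_dvd _ _).1 h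
  have habs : |g.toAdd| < ((g.toAdd.natAbs + 1 : ℕ) : ℤ) := by
    rw [Int.abs_eq_natAbs]
    omega
  exact Int.eq_zero_of_abs_lt_dvd hdvd habs

theorem residuallyFinite_units_of_finite_quotient_pow {R : Type*} [CommRing R] [IsDomain R]
    [IsNoetherianRing R] {I : Ideal R} (hI : I ≠ ⊤) (hfin : ∀ n : ℕ, Finite (R ⧸ I ^ n)) :
    Group.ResiduallyFinite Rˣ := by
  refine Group.residuallyFinite_of_forall_exists_finite_monoidHom fun u hu => ?_
  obtain ⟨n, hn⟩ : ∃ n : ℕ, (u : R) - 1 ∉ I ^ n := by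
    by_contra! hmem
    have hbot : (u : R) - 1 ∈ ⨅ n : ℕ, I ^ n := Ideal.mem_iInf.2 hmem
    rw [Ideal.iInf_pow_eq_bot_of_isDomain I hI] at hbot
    exact hu (Units.ext (sub_eq_zero.1 hbot))
  refine ⟨(R ⧸ I ^ n)ˣ, inferInstance, inferInstance,
    Units.map (Ideal.Quotient.mk (I ^ n)).toMonoidHom, fun h => hn ?_⟩
  exact Ideal.Quotient.eq.1 (congrArg Units.val h)

open NumberField in
theorem residuallyFinite_units_ringOfIntegers (K : Type*) [Field K] [NumberField K] :
    Group.ResiduallyFinite (𝓞 K)ˣ := by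
  obtain ⟨P, hP⟩ := Ideal.exists_maximal (𝓞 K)
  have hP0 : P ≠ ⊥ := (P.bot_lt_of_maximal (RingOfIntegers.not_isField K)).ne'
  exact residuallyFinite_units_of_finite_quotient_pow hP.ne_top fun n =>
    Ideal.finiteQuotientOfFreeOfNeBot _ (pow_ne_zero n hP0)

theorem mem_range_unitsMap_algebraMap_of_valuationOfNeZero_eq_one {R K : Type*} [CommRing R]
    [IsDedekindDomain R] [Field K] [Algebra R K] [IsFractionRing R K] {x : Kˣ}
    (hx : ∀ v : IsDedekindDomain.HeightOneSpectrum R, v.valuationOfNeZero x = 1) :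
    x ∈ (Units.map (algebraMap R K : R →* K)).range := by
  have hint : ∀ y : Kˣ, (∀ v : IsDedekindDomain.HeightOneSpectrum R, v.valuationOfNeZero y = 1) →
      ∃ r : R, algebraMap R K r = y := fun y hy =>
    IsDedekindDomain.HeightOneSpectrum.mem_integers_of_valuation_le_one K _ fun v => by
      rw [← v.valuationOfNeZero_eq, hy, WithZero.coe_one]
  obtain ⟨r, hr⟩ := hint x hx
  obtain ⟨s, hs⟩ := hint x⁻¹ fun v => by rw [map_inv, hx, inv_one]
  have hrs : r * s = 1 := IsFractionRing.injective R K <| by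
    rw [map_mul, hr, hs, Units.mul_inv, map_one]
  exact ⟨⟨r, s, hrs, (mul_comm s r).trans hrs⟩, Units.ext hr⟩

open NumberField in
theorem IsFPerfect.eq_one_of_numberField {G K : Type*} [Group G] [Field K] [NumberField K]
    (hG : IsFPerfect G) (f : G →* K) : f = 1 := by
  have hval (v : IsDedekindDomain.HeightOneSpectrum (𝓞 K)) (g : G) :
      v.valuationOfNeZero (f.toHomUnits g) = 1 :=
    have := residuallyFinite_multiplicative_int
    DFunLike.congr_fun (hG.eq_one_of_residuallyFinite (v.valuationOfNeZero.comp f.toHomUnits)) g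
  let ι : (𝓞 K)ˣ →* Kˣ := Units.map (algebraMap (𝓞 K) K : 𝓞 K →* K)
  let e : (𝓞 K)ˣ ≃* ι.range :=
    MonoidHom.ofInjective (Units.map_injective RingOfIntegers.coe_injective)
  let f' : G →* ι.range := f.toHomUnits.codRestrict ι.range fun g =>
    mem_range_unitsMap_algebraMap_of_valuationOfNeZero_eq_one fun v => hval v g
  have := residuallyFinite_units_ringOfIntegers K
  have hf' : e.symm.toMonoidHom.comp f' = 1 := hG.eq_one_of_residuallyFinite _
  ext g
  have hg : f' g = 1 := (MulEquiv.map_eq_one_iff e.symm).1 (DFunLike.congr_fun hf' g)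
  exact congrArg (fun u : ι.range => ((u : Kˣ) : K)) hg

end NumberField

section Semilinear

open scoped Pointwise

theorem nontrivial_of_isIrreducible {G k V : Type*} [Monoid G] [Field k] [AddCommGroup V]
    [Module k V] (ρ : Representation k G V) [ρ.IsIrreducible] : Nontrivial V :=
  IsSimpleModule.nontrivial (MonoidAlgebra k G) ρ.asModule

variable {G k K V : Type*} [Group G] [Field k] [CommRing K] [Algebra k K] [Module.Finite k K]
  [MulSemiringAction G K] [AddCommGroup V] [Module k V] [Module K V]

theorem IsFPerfect.smul_prime_eq (hG : IsFPerfect G) [IsArtinianRing K] (P : Ideal K) [P.IsPrime]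
    (g : G) : g • P = P := by
  refine hG.smul_eq_of_finite_orbit ((Set.finite_range PrimeSpectrum.asIdeal).subset ?_) g
  rintro _ ⟨h, rfl⟩
  exact ⟨⟨h • P, inferInstance⟩, rfl⟩

theorem IsFPerfect.isDomain_of_isIrreducible (hG : IsFPerfect G) [IsScalarTower k K V]
    [FaithfulSMul K V] (ρ : Representation k G V) [ρ.IsIrreducible]
    (hρ : ∀ (g : G) (x : K) (v : V), ρ g (x • v) = (g • x) • ρ g v) : IsDomain K := by
  have : IsArtinianRing K := IsArtinianRing.of_finite k K
  have : Nontrivial V := nontrivial_of_isIrreducible ρ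
  obtain ⟨P, hP⟩ := associatedPrimes.nonempty K V
  obtain ⟨hprime, v, hv⟩ := isAssociatedPrime_iff.1 hP
  let σ : Subrepresentation ρ :=
    { toSubmodule := (Submodule.torsionBySet K V P).restrictScalars k
      apply_mem_toSubmodule := fun g w hw => by
        rw [Submodule.restrictScalars_mem, Submodule.mem_torsionBySet_iff] at hw ⊢
        rintro ⟨x, hx⟩
        have hx' : g⁻¹ • x ∈ P := by
          rw [← hG.smul_prime_eq P g⁻¹]
          exact Ideal.smul_mem_pointwise_smul g⁻¹ x P hx
        have hgw := hρ g (g⁻¹ • x) w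
        rwa [hw ⟨_, hx'⟩, map_zero, smul_inv_smul, eq_comm] at hgw }
  have hσ : σ = ⊤ := by
    refine (eq_bot_or_eq_top σ).resolve_left fun hbot => hprime.ne_top ?_
    have hvσ : v ∈ σ.toSubmodule := (Submodule.mem_torsionBySet_iff _ _).2 fun ⟨x, hx⟩ => by
      rwa [hv, SetLike.mem_coe, Submodule.mem_colon_singleton] at hx
    rw [hbot] at hvσ
    have hv0 : v = 0 := hvσ
    rw [hv, hv0, Submodule.colon_singleton_zero]
  have hPbot : P = ⊥ := by
    refine (Submodule.eq_bot_iff P).2 fun x hx => FaithfulSMul.eq_of_smul_eq_smul fun w : V => ?_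
    have hwσ : w ∈ σ.toSubmodule := hσ ▸ Submodule.mem_top
    rw [zero_smul, (Submodule.mem_torsionBySet_iff _ _).1 hwσ ⟨x, hx⟩]
  rw [hPbot] at hprime
  exact IsDomain.of_bot_isPrime K

theorem IsFPerfect.smul_eq_of_isDomain (hG : IsFPerfect G) [SMulCommClass G k K] [IsDomain K]
    (g : G) (x : K) : g • x = x := by
  have : Finite (K ≃ₐ[k] K) := Finite.of_injective _ AlgEquiv.coe_toAlgHom_injective
  exact DFunLike.congr_fun (DFunLike.congr_fun
    (hG.eq_one_of_residuallyFinite (MulSemiringAction.toAlgAut G k K)) g) x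

end Semilinear

section Scalar

variable {G K V : Type*} [Group G] [AddCommGroup V]

theorem IsFPerfect.pow_finrank_eq_one (hG : IsFPerfect G) [Field K] [NumberField K] [Module K V]
    (ρ : Representation K G V) {g : G} {c : K} (hc : ρ g = c • 1) :
    c ^ Module.finrank K V = 1 := by
  have hdet := DFunLike.congr_fun (hG.eq_one_of_numberField (LinearMap.det.comp ρ)) g
  rwa [MonoidHom.comp_apply, hc, LinearMap.det_smul, map_one, mul_one] at hdet

theorem IsFPerfect.exists_pow_eq_one (hG : IsFPerfect G) [CommRing K] [IsDomain K]
    [hK : Algebra ℚ K] [Module.Finite ℚ K] [Module K V] [Module.Finite K V] [Nontrivial V]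
    (ρ : Representation K G V) : ∃ d ≠ 0, ∀ (g : G) (c : K), ρ g = c • 1 → c ^ d = 1 := by
  have : IsArtinianRing K := IsArtinianRing.of_finite ℚ K
  have : CharZero K := algebraRat.charZero K
  -- The field structure below brings its own `ℚ`-algebra structure, not syntactically `hK`.
  have hfin (a : Algebra ℚ K) : @Module.Finite ℚ K _ _ a.toModule := by
    rwa [Subsingleton.elim a hK]
  let _ : Field K := (IsArtinianRing.isField_of_isDomain K).toField
  have : NumberField K := { to_finiteDimensional := hfin _ }
  exact ⟨Module.finrank K V, Module.finrank_pos.ne', fun g c hc => hG.pow_finrank_eq_one ρ hc⟩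

end Scalar

section Conjugation

open scoped IsMulCommutative

variable {G k V : Type*} [Group G] [Field k] [AddCommGroup V] [Module k V]

/-- The action of `G` on `End V` by conjugation through the representation `ρ`. -/
noncomputable def endConj (ρ : Representation k G V) :
    G →* (Module.End k V ≃ₐ[k] Module.End k V) :=
  (MulSemiringAction.toAlgAut (ConjAct (Module.End k V)ˣ) k (Module.End k V)).comp
    (ConjAct.toConjAct.toMonoidHom.comp ρ.asGroupHom)

theorem endConj_apply (ρ : Representation k G V) (g : G) (x : Module.End k V) :
    endConj ρ g x = ρ g * x * ρ g⁻¹ := by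
  rfl

theorem endConj_apply_apply (ρ : Representation k G V) (g : G) (x : Module.End k V) (v : V) :
    endConj ρ g x (ρ g v) = ρ g (x v) := by
  simp [endConj_apply]

theorem endConj_mem_adjoin (ρ : Representation k G V) (A : Subgroup G) [A.Normal] (g : G) :
    ∀ x ∈ Algebra.adjoin k (ρ '' A), endConj ρ g x ∈ Algebra.adjoin k (ρ '' A) := by
  suffices h : (Algebra.adjoin k (ρ '' A)).map (endConj ρ g : _ →ₐ[k] _) ≤
      Algebra.adjoin k (ρ '' A) from fun x hx => h ⟨x, hx, rfl⟩
  rw [AlgHom.map_adjoin]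
  refine Algebra.adjoin_mono ?_
  rintro _ ⟨_, ⟨a, ha, rfl⟩, rfl⟩
  refine ⟨g * a * g⁻¹, Subgroup.Normal.conj_mem ‹_› a ha g, ?_⟩
  rw [map_mul, map_mul]
  rfl

/-- The conjugation action restricted to the subalgebra generated by the image of `A`. -/
noncomputable abbrev adjoinConjAction (ρ : Representation k G V) (A : Subgroup G) [A.Normal] :
    MulSemiringAction G (Algebra.adjoin k (ρ '' A)) where
  smul g x := ⟨endConj ρ g x, endConj_mem_adjoin ρ A g x x.2⟩
  one_smul x := Subtype.ext (DFunLike.congr_fun (map_one (endConj ρ)) x.1)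
  mul_smul g h x := Subtype.ext (DFunLike.congr_fun (map_mul (endConj ρ) g h) x.1)
  smul_zero g := Subtype.ext (map_zero (endConj ρ g))
  smul_add g x y := Subtype.ext (map_add (endConj ρ g) x.1 y.1)
  smul_one g := Subtype.ext (map_one (endConj ρ g))
  smul_mul g x y := Subtype.ext (map_mul (endConj ρ g) x.1 y.1)

theorem IsFPerfect.exists_pow_eq_one_of_isIrreducible [Module ℚ V] [FiniteDimensional ℚ V]
    (hG : IsFPerfect G) (ρ : Representation ℚ G V) [ρ.IsIrreducible] (A : Subgroup G) [A.Normal]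
    (hA : ∀ a ∈ A, ∀ b ∈ A, ρ a * ρ b = ρ b * ρ a) : ∃ d ≠ 0, ∀ a ∈ A, ρ a ^ d = 1 := by
  let K := Algebra.adjoin ℚ (ρ '' A)
  have : IsMulCommutative K := Algebra.isMulCommutative_adjoin ℚ <| by
    rintro _ ⟨a, ha, rfl⟩ _ ⟨b, hb, rfl⟩
    exact hA a ha b hb
  let _ : MulSemiringAction G K := adjoinConjAction ρ A
  have hρ (g : G) (x : K) (v : V) : ρ g (x • v) = (g • x) • ρ g v :=
    (endConj_apply_apply ρ g x v).symm
  have : SMulCommClass G ℚ K := ⟨fun g r x => Subtype.ext (map_smul (endConj ρ g) r x.1)⟩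
  have : IsDomain K := hG.isDomain_of_isIrreducible ρ hρ
  let ρK : Representation K G V :=
    { toFun := fun g =>
        { toFun := ρ g
          map_add' := map_add (ρ g)
          map_smul' := fun x v => by rw [hρ, hG.smul_eq_of_isDomain (k := ℚ), RingHom.id_apply] }
      map_one' := by ext; simp
      map_mul' := fun g h => by ext; simp }
  have : Module.Finite K V := Module.Finite.of_restrictScalars_finite ℚ K V
  have : Nontrivial V := nontrivial_of_isIrreducible ρ
  obtain ⟨d, hd, hpow⟩ := hG.exists_pow_eq_one ρK
  refine ⟨d, hd, fun a ha => ?_⟩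
  have hc := hpow a ⟨ρ a, Algebra.subset_adjoin ⟨a, ha, rfl⟩⟩ rfl
  exact congrArg Subtype.val hc

end Conjugation

section Unipotent

open scoped IsMulCommutative

variable {G k V : Type*} [Group G] [AddCommGroup V]

theorem IsFPerfect.isTrivial_of_isIrreducible [Module ℚ V] [FiniteDimensional ℚ V]
    (hG : IsFPerfect G) [Group.IsSolvable G] (hr : HasFiniteRank G)
    (ρ : Representation ℚ G V) [ρ.IsIrreducible] : ρ.IsTrivial := by
  let f := ρ.asGroupHom.rangeRestrict
  have hf : Function.Surjective f := ρ.asGroupHom.rangeRestrict_surjective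
  have hH := hr.of_surjective f hf
  have hcoe (g : G) : (f g).1.1 = ρ g := ρ.asGroupHom_apply g
  have : Group.IsSolvable ρ.asGroupHom.range := Group.isSolvable_of_surjective hf
  have hsub : Subsingleton ρ.asGroupHom.range := by
    refine (hG.of_surjective f hf).subsingleton_of_forall_finite hH fun A hA hcomm => ?_
    obtain ⟨d, hd, hpow⟩ := hG.exists_pow_eq_one_of_isIrreducible ρ (A.comap f) fun a ha b hb => by
      rw [← hcoe, ← hcoe]
      exact congrArg (fun x : A => x.1.1.1) (mul_comm (⟨f a, ha⟩ : A) ⟨f b, hb⟩)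
    refine hH.finite_subgroup_of_pow_eq_one A hd fun x hx => ?_
    obtain ⟨a, rfl⟩ := hf x
    refine Subtype.ext (Units.ext ?_)
    exact (congrArg (· ^ d) (hcoe a)).trans (hpow a hx)
  refine ⟨fun g => ?_⟩
  rw [← hcoe, Subsingleton.elim (f g) 1]
  rfl

section Quotient

variable [Field k] [Module k V] {ρ : Representation k G V}

/-- The representation on the subquotient `σ / τ`, for `τ ≤ σ`. Mathlib has no quotient of one
subrepresentation by another, so `τ` enters through its preimage in `σ`. -/
def subquotient (τ σ : Subrepresentation ρ) :
    Representation k G (σ.toSubmodule ⧸ τ.toSubmodule.submoduleOf σ.toSubmodule) :=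
  σ.toRepresentation.quotient _ fun g _ hv => τ.apply_mem_toSubmodule g hv

theorem isIrreducible_subquotient_of_covBy {τ σ : Subrepresentation ρ} (h : τ ⋖ σ) :
    (subquotient τ σ).IsIrreducible := by
  obtain ⟨w, hwσ, hwτ⟩ := SetLike.exists_of_lt h.lt
  have hne : (⊥ : Subrepresentation (subquotient τ σ)) ≠ ⊤ := fun heq => hwτ <| by
    have hw : (Submodule.Quotient.mk ⟨w, hwσ⟩ : _ ⧸ τ.toSubmodule.submoduleOf σ.toSubmodule) ∈
        (⊥ : Subrepresentation (subquotient τ σ)) := heq ▸ Submodule.mem_top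
    exact (Submodule.Quotient.mk_eq_zero (τ.toSubmodule.submoduleOf _)).1 hw
  refine { exists_pair_ne := ⟨_, _, hne⟩, eq_bot_or_eq_top := fun κ => ?_ }
  let κ' : Subrepresentation ρ :=
    { toSubmodule := (κ.toSubmodule.comap (Submodule.mkQ _)).map σ.toSubmodule.subtype
      apply_mem_toSubmodule := by
        rintro g _ ⟨v, hv, rfl⟩
        exact ⟨σ.toRepresentation g v, κ.apply_mem_toSubmodule g hv, rfl⟩ }
  have hκσ : κ' ≤ σ := by
    rintro _ ⟨v, -, rfl⟩
    exact v.2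
  have hτκ : τ ≤ κ' := fun v hv =>
    ⟨⟨v, h.le hv⟩, Submodule.le_comap_mkQ (τ.toSubmodule.submoduleOf _) κ.toSubmodule hv, rfl⟩
  refine (h.eq_or_eq hτκ hκσ).imp (fun hκ => ?_) fun hκ => ?_
  · refine le_bot_iff.1 fun q => q.inductionOn fun v hv => ?_
    exact (Submodule.Quotient.mk_eq_zero _).2 (hκ.le ⟨v, hv, rfl⟩)
  · refine top_le_iff.1 fun q => q.inductionOn fun v _ => ?_
    obtain ⟨v', hv', hvv'⟩ := hκ.ge v.2
    rwa [← Subtype.ext hvv']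

end Quotient

theorem IsFPerfect.exists_lt_forall_sub_mem [Module ℚ V] [FiniteDimensional ℚ V] (hG : IsFPerfect G)
    [Group.IsSolvable G] (hr : HasFiniteRank G) (ρ : Representation ℚ G V)
    {σ : Subrepresentation ρ} (hσ : σ ≠ ⊥) : ∃ τ < σ, ∀ g, ∀ v ∈ σ, ρ g v - v ∈ τ := by
  have : WellFoundedGT (Subrepresentation ρ) :=
    StrictMono.wellFoundedGT (f := Subrepresentation.toSubmodule) fun _ _ h => h
  obtain ⟨τ, hτ⟩ := exists_covBy_of_wellFoundedGT (a := σ) (by rwa [isMin_iff_eq_bot])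
  have := isIrreducible_subquotient_of_covBy hτ
  have := hG.isTrivial_of_isIrreducible hr (subquotient τ σ)
  refine ⟨τ, hτ.lt, fun g v hv => ?_⟩
  have hfix := (subquotient τ σ).isTrivial_apply g (Submodule.Quotient.mk ⟨v, hv⟩)
  exact (Submodule.Quotient.eq (τ.toSubmodule.submoduleOf σ.toSubmodule)).1 hfix

end Unipotent

section Rationalization

open scoped TensorProduct

variable {G A : Type*} [Group G] [CommGroup A]

/-- The representation of `G` on `ℚ ⊗ A` induced by an action on the abelian group `A`, where the
torsion of `A` dies. -/
noncomputable def rationalization (φ : G →* MulAut A) :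
    Representation ℚ G (ℚ ⊗[ℤ] Additive A) where
  toFun g := ((φ g).toMonoidHom.toAdditive.toIntLinearMap).baseChange ℚ
  map_one' := by
    ext
    simp
  map_mul' g h := by
    ext
    simp

theorem rationalization_one_tmul (φ : G →* MulAut A) (g : G) (a : A) :
    rationalization φ g (1 ⊗ₜ Additive.ofMul a) = 1 ⊗ₜ Additive.ofMul (φ g a) :=
  rfl

theorem HasFiniteRank.finite_rat_tensorProduct (hA : HasFiniteRank A) :
    Module.Finite ℚ (ℚ ⊗[ℤ] Additive A) := by
  rw [← Module.rank_lt_aleph0_iff,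
    IsBaseChange.rank_eq (TensorProduct.isBaseChange ℤ (Additive A) ℚ)]
  exact hA.rank_additive_lt_aleph0

theorem isOfFinOrder_of_one_tmul_eq_zero {a : A} (h : (1 : ℚ) ⊗ₜ[ℤ] Additive.ofMul a = 0) :
    IsOfFinOrder a := by
  obtain ⟨n, hn⟩ := (IsLocalizedModule.eq_zero_iff (nonZeroDivisors ℤ)
    (TensorProduct.mk ℤ ℚ (Additive A) 1)).1 h
  exact isOfFinOrder_iff_zpow_eq_one.2 ⟨n, nonZeroDivisors.ne_zero n.2, hn⟩

theorem IsFPerfect.apply_eq_of_isOfFinOrder (hG : IsFPerfect G) (hA : HasFiniteRank A)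
    (φ : G →* MulAut A) {a : A} (ha : IsOfFinOrder a) (g : G) : φ g a = a := by
  let _ : MulAction G A := MulAction.compHom A φ
  let T : Subgroup A := (powMonoidHom (orderOf a)).ker
  have hT : Finite T := (hA.of_injective _ T.subtype_injective).finite_of_pow_eq_one
    ha.orderOf_pos.ne' fun x => Subtype.ext x.2
  refine hG.smul_eq_of_finite_orbit ((Set.finite_coe_iff.1 hT).subset ?_) g
  rintro _ ⟨h, rfl⟩
  change φ h a ^ orderOf a = 1
  rw [← map_pow, pow_orderOf_eq_one, map_one]

/-- The elements of `A` whose image in `ℚ ⊗ A` lies in `σ`. For `σ = ⊥` this is the torsion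
subgroup. -/
def integralPoints (σ : Submodule ℚ (ℚ ⊗[ℤ] Additive A)) : Subgroup A :=
  (σ.toAddSubgroup.comap (TensorProduct.mk ℤ ℚ (Additive A) 1).toAddMonoidHom).toSubgroup'

theorem mem_integralPoints {σ : Submodule ℚ (ℚ ⊗[ℤ] Additive A)} {a : A} :
    a ∈ integralPoints σ ↔ 1 ⊗ₜ Additive.ofMul a ∈ σ :=
  Iff.rfl

end Rationalization

section Nilpotent

open scoped TensorProduct IsMulCommutative commutatorElement

variable {G : Type*} [Group G] {A : Subgroup G} [A.Normal] [IsMulCommutative A]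

theorem commutator_map_integralPoints_le
    {τ σ : Subrepresentation (rationalization (MulAut.conjNormal : G →* MulAut A))}
    (h : ∀ g, ∀ v ∈ σ, rationalization MulAut.conjNormal g v - v ∈ τ) :
    ⁅(integralPoints σ.toSubmodule).map A.subtype, (⊤ : Subgroup G)⁆ ≤
      (integralPoints τ.toSubmodule).map A.subtype := by
  rw [Subgroup.commutator_le]
  rintro _ ⟨a, ha, rfl⟩ g -
  refine ⟨a / MulAut.conjNormal g a, mem_integralPoints.2 ?_, ?_⟩
  · rw [ofMul_div, TensorProduct.tmul_sub, ← rationalization_one_tmul, ← neg_sub]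
    exact τ.toSubmodule.neg_mem (h g _ ha)
  · simp [commutatorElement_def, mul_assoc, div_eq_mul_inv]

theorem IsFPerfect.map_integralPoints_bot_le_center (hG : IsFPerfect G) (hr : HasFiniteRank G) :
    (integralPoints ⊥).map A.subtype ≤ Subgroup.center G := by
  rintro _ ⟨a, ha, rfl⟩
  have hzero : (1 : ℚ) ⊗ₜ[ℤ] Additive.ofMul a = 0 := (Submodule.mem_bot ℚ).1 ha
  refine Subgroup.mem_center_iff.2 fun g => mul_inv_eq_iff_eq_mul.1 ?_
  have hfix := hG.apply_eq_of_isOfFinOrder (hr.of_injective _ A.subtype_injective)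
    MulAut.conjNormal (isOfFinOrder_of_one_tmul_eq_zero hzero) g
  exact congrArg Subtype.val hfix

theorem IsFPerfect.isNilpotent_of_lowerCentralSeries_le (hG : IsFPerfect G) [Group.IsSolvable G]
    (hr : HasFiniteRank G) {c : ℕ} (hc : (⊤ : Subgroup G).lowerCentralSeries c ≤ A) :
    Group.IsNilpotent G := by
  have : Module.Finite ℚ (ℚ ⊗[ℤ] Additive A) :=
    (hr.of_injective _ A.subtype_injective).finite_rat_tensorProduct
  let ρ := rationalization (MulAut.conjNormal : G →* MulAut A)
  have : WellFoundedLT (Subrepresentation ρ) :=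
    StrictMono.wellFoundedLT (f := Subrepresentation.toSubmodule) fun _ _ h => h
  let S : Set (Subrepresentation ρ) := {σ | ∃ n,
    (⊤ : Subgroup G).lowerCentralSeries n ≤ (integralPoints σ.toSubmodule).map A.subtype}
  have htop : ⊤ ∈ S := ⟨c, fun x hx => ⟨⟨x, hc hx⟩, trivial, rfl⟩⟩
  obtain ⟨σ, ⟨n, hn⟩, hmin⟩ := WellFounded.has_min wellFounded_lt S ⟨⊤, htop⟩
  obtain rfl : σ = ⊥ := by
    by_contra hσ
    obtain ⟨τ, hτ, hsub⟩ := hG.exists_lt_forall_sub_mem hr ρ hσ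
    refine hmin τ ⟨n + 1, ?_⟩ hτ
    rw [Subgroup.lowerCentralSeries_succ]
    exact (Subgroup.commutator_mono hn le_rfl).trans (commutator_map_integralPoints_le hsub)
  refine Subgroup.nilpotent_iff_lowerCentralSeries.2 ⟨n + 1, ?_⟩
  rw [Subgroup.lowerCentralSeries_succ, Subgroup.commutator_eq_bot_iff_le_centralizer,
    Subgroup.coe_top, Subgroup.centralizer_univ]
  exact hn.trans (hG.map_integralPoints_bot_le_center hr)

end Nilpotent

theorem IsFPerfect.isNilpotent {G : Type*} [Group G] (hG : IsFPerfect G) (hs : Group.IsSolvable G)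
    (hr : HasFiniteRank G) : Group.IsNilpotent G := by
  obtain ⟨n, hn⟩ := (Group.isSolvable_def G).1 hs
  induction n generalizing G with
  | zero =>
    have : Subsingleton G := Subgroup.subsingleton_iff.1 (subsingleton_of_bot_eq_top hn.symm)
    infer_instance
  | succ n ih =>
    let A := derivedSeries G n
    have hsurj := QuotientGroup.mk'_surjective A
    have hquot : derivedSeries (G ⧸ A) n = ⊥ := by
      rw [← map_derivedSeries_eq hsurj, Subgroup.map_eq_bot_iff, QuotientGroup.ker_mk']
    obtain ⟨c, hc⟩ := Subgroup.nilpotent_iff_lowerCentralSeries.1 <|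
      ih (hG.of_surjective _ hsurj) (Group.isSolvable_of_surjective hsurj)
        (hr.of_surjective _ hsurj) hquot
    have : IsMulCommutative A := by
      rw [← Subgroup.le_centralizer_iff_isMulCommutative]
      exact Subgroup.commutator_eq_bot_iff_le_centralizer.1 hn
    refine hG.isNilpotent_of_lowerCentralSeries_le (A := A) (c := c) hr ?_
    rw [← QuotientGroup.ker_mk' A, ← Subgroup.map_eq_bot_iff, Subgroup.map_lowerCentralSeries,
      Subgroup.map_top_of_surjective _ hsurj, hc]

/-- A solvable group of finite abelian rank with no proper subgroups of finite index is
nilpotent; consequently, a solvable non-nilpotent group with no maximal subgroups has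
infinite abelian rank. -/
theorem stmt14 :
    (∀ (G : Type) [Group G], IsSolvable G → HasFiniteRank G →
      (∀ H : Subgroup G, H.index ≠ 0 → H = ⊤) → Group.IsNilpotent G) ∧
    (∀ (G : Type) [Group G], IsSolvable G → (∀ M : Subgroup G, ¬ IsCoatom M) →
      ¬ Group.IsNilpotent G → ¬ HasFiniteRank G) := by
  refine ⟨fun G _ hs hr hG => ?_, fun G _ hs hM hn hr => hn ?_⟩
  · exact IsFPerfect.isNilpotent hG hs hr
  · exact (isFPerfect_of_forall_not_isCoatom hM).isNilpotent hs hr
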